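/- arXiv:2101.02195 — 7 statements merged into one kernel-verified Lean document; each statement's English description precedes it below -/
import Mathlib

section
/- Suppose A, B ∈ ℝ^{d×d} are symmetric positive definite matrices with A − B positive semidefinite. Then for any x ∈ ℝ^d, √(xᵀ A x) ≤ √(xᵀ B x) · √(det(A)/det(B)). -/
open Matrix

lemma aux_psd {d : ℕ} (P : Matrix (Fin d) (Fin d) ℝ) (hP : P.PosSemidef) :
    ((1 + P).det • (1 : Matrix (Fin d) (Fin d) ℝ) - (1 + P)).PosSemidef := by
  obtain ⟨U, D, hU1, hU2, hD, hPD⟩ : ∃ (U : Matrix (Fin d) (Fin d) ℝ) (D : Fin d → ℝ),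
      U * Uᴴ = 1 ∧ Uᴴ * U = 1 ∧ (∀ i, 0 ≤ D i) ∧ P = U * diagonal D * Uᴴ := by
    refine ⟨hP.1.eigenvectorUnitary, hP.1.eigenvalues, ?_, ?_, hP.eigenvalues_nonneg, ?_⟩
    · exact Unitary.coe_mul_star_self hP.1.eigenvectorUnitary
    · exact Unitary.coe_star_mul_self hP.1.eigenvectorUnitary
    · have := hP.1.spectral_theorem
      rw [Unitary.conjStarAlgAut_apply] at this
      exact this
  have h1 : 1 + P = U * diagonal (fun i => 1 + D i) * Uᴴ := by
    have : diagonal (fun i => 1 + D i) = 1 + diagonal D := by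
      rw [← diagonal_one, diagonal_add]
    rw [this, mul_add, add_mul, mul_one, hU1, hPD]
  have hdet : (1 + P).det = ∏ i, (1 + D i) := by
    rw [h1, det_mul_comm, ← mul_assoc, hU2, one_mul, det_diagonal]
  have h2 : (1 + P).det • (1 : Matrix (Fin d) (Fin d) ℝ) - (1 + P)
      = U * diagonal (fun i => (∏ j, (1 + D j)) - (1 + D i)) * Uᴴ := by
    have : diagonal (fun i => (∏ j, (1 + D j)) - (1 + D i))
        = (∏ j, (1 + D j)) • 1 - diagonal (fun i => 1 + D i) := by
      rw [smul_one_eq_diagonal, diagonal_sub]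
    rw [this, mul_sub, sub_mul, ← h1, hdet, Matrix.mul_smul, Matrix.smul_mul, mul_one, hU1]
  rw [h2]
  refine PosSemidef.mul_mul_conjTranspose_same (posSemidef_diagonal_iff.2 fun i => ?_) U
  rw [← Finset.mul_prod_erase _ _ (Finset.mem_univ i)]
  have : 1 ≤ ∏ j ∈ Finset.univ.erase i, (1 + D j) :=
    Finset.one_le_prod fun j _ => by linarith [hD j]
  nlinarith [hD i]

open scoped MatrixOrder Matrix.Norms.L2Operator in
lemma aux_factor {d : ℕ} (B : Matrix (Fin d) (Fin d) ℝ) (hB : B.PosSemidef) :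
    ∃ S : Matrix (Fin d) (Fin d) ℝ, B = Sᴴ * S :=
  CStarAlgebra.nonneg_iff_eq_star_mul_self.mp hB.nonneg

/-- If `A, B ∈ ℝ^{d×d}` are symmetric positive definite and
`A - B` is positive semidefinite, then for any `x ∈ ℝ^d`,
`‖x‖_A ≤ ‖x‖_B · √(det A / det B)`, where `‖x‖_M = √(xᵀ M x)`. -/
theorem stmt_3 (d : ℕ) (A B : Matrix (Fin d) (Fin d) ℝ)
    (hA : A.PosDef) (hB : B.PosDef) (hAB : (A - B).PosSemidef)
    (x : Fin d → ℝ) :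
    Real.sqrt (x ⬝ᵥ A.mulVec x) ≤
      Real.sqrt (x ⬝ᵥ B.mulVec x) * Real.sqrt (A.det / B.det) := by
  obtain ⟨S, hS⟩ := aux_factor B hB.posSemidef
  have hBd := hB.det_pos
  have hSu : IsUnit S.det := by
    rw [isUnit_iff_ne_zero]
    intro h
    rw [hS, det_mul, h, mul_zero] at hBd
    exact lt_irrefl _ hBd
  have hr : S⁻¹ * S = 1 := nonsing_inv_mul S hSu
  have hr' : Sᴴ * (S⁻¹)ᴴ = 1 := by rw [← conjTranspose_mul, hr, conjTranspose_one]
  have hP := hAB.conjTranspose_mul_mul_same S⁻¹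
  set P := (S⁻¹)ᴴ * (A - B) * S⁻¹ with hPdef
  have hSP : Sᴴ * P * S = A - B := by
    rw [hPdef]
    calc _ = (Sᴴ * (S⁻¹)ᴴ) * (A - B) * (S⁻¹ * S) := by simp only [mul_assoc]
      _ = _ := by rw [hr, hr', one_mul, mul_one]
  have hSA : Sᴴ * (1 + P) * S = A := by
    rw [mul_add, add_mul, hSP, mul_one, ← hS]; abel
  have hdet : (1 + P).det = A.det / B.det := by
    rw [eq_div_iff hBd.ne', ← hSA]
    conv_lhs => rw [hS]
    simp only [det_mul]; ring
  have h := (aux_psd P hP).conjTranspose_mul_mul_same S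
  rw [mul_sub, sub_mul, hSA, Matrix.mul_smul, Matrix.smul_mul, mul_one, ← hS, hdet] at h
  have h3 := h.dotProduct_mulVec_nonneg x
  rw [sub_mulVec, smul_mulVec, dotProduct_sub, dotProduct_smul, star_trivial, smul_eq_mul] at h3
  rw [← Real.sqrt_mul' _ (div_nonneg hA.det_pos.le hBd.le)]
  apply Real.sqrt_le_sqrt
  linarith
end

section
/- Let Λ_0 ∈ ℝ^{d×d} be symmetric positive definite, let φ_1, φ_2, … be vectors in ℝ^d, and set Λ_i = Λ_0 + Σ_{j=1}^{i−1} φ_j φ_jᵀ for i ≥ 1 (so Λ_1 = Λ_0). Then for every t ≥ 1, Σ_{i=1}^t min{1, φ_iᵀ Λ_i^{−1} φ_i} ≤ 2 log(det(Λ_{t+1})/det(Λ_1)). -/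
open Matrix

theorem aux_min_log (x : ℝ) (hx : 0 ≤ x) : min 1 x ≤ 2 * Real.log (1 + x) := by
  have h := Real.one_sub_inv_le_log_of_pos (show 0 < 1 + x by linarith)
  have h2 : min 1 x ≤ 2 * (1 - (1 + x)⁻¹) := by
    have e : 2 * (1 - (1 + x)⁻¹) = 2 * x / (1 + x) := by
      field_simp
      ring
    rw [e, le_div_iff₀ (by linarith)]
    rcases le_total 1 x with h1 | h1
    · rw [min_eq_left h1]; linarith
    · rw [min_eq_right h1]; nlinarith
  linarith

theorem aux_det {d : ℕ} (A : Matrix (Fin d) (Fin d) ℝ) (hA : A.PosDef) (v : Fin d → ℝ) :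
    (A + Matrix.vecMulVec v v).det = A.det * (1 + v ⬝ᵥ A⁻¹.mulVec v) := by
  have hu : IsUnit A.det := hA.det_pos.ne'.isUnit
  rw [Matrix.vecMulVec_eq Unit, Matrix.det_add_replicateCol_mul_replicateRow hu]
  congr 1
  rw [Matrix.det_unique]
  simp [Matrix.mul_assoc, Matrix.mul_apply, Matrix.mulVec, dotProduct]

/-- Let `Λ₀ ∈ ℝ^{d×d}` be symmetric positive definite,
`φ_1, φ_2, …` vectors in `ℝ^d`, and `Λ_i = Λ₀ + ∑_{j=1}^{i-1} φ_j φ_jᵀ`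
(so `Λ_1 = Λ₀`). Then for every `t ≥ 1`,
`∑_{i=1}^t min{1, φ_iᵀ Λ_i⁻¹ φ_i} ≤ 2 log(det Λ_{t+1} / det Λ_1)`. -/
theorem stmt_4 (d : ℕ) (Λ₀ : Matrix (Fin d) (Fin d) ℝ) (hΛ₀ : Λ₀.PosDef)
    (φ : ℕ → Fin d → ℝ)
    (Λ : ℕ → Matrix (Fin d) (Fin d) ℝ)
    (hΛ : ∀ i, Λ i = Λ₀ + ∑ j ∈ Finset.Icc 1 (i - 1), Matrix.vecMulVec (φ j) (φ j))
    (t : ℕ) (ht : 1 ≤ t) :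
    ∑ i ∈ Finset.Icc 1 t, min 1 (φ i ⬝ᵥ (Λ i)⁻¹.mulVec (φ i)) ≤
      2 * Real.log ((Λ (t + 1)).det / (Λ 1).det) := by
  have hpd : ∀ i, (Λ i).PosDef := by
    intro i
    rw [hΛ i]
    refine hΛ₀.add_posSemidef (Matrix.posSemidef_sum _ fun j _ => ?_)
    simpa using Matrix.posSemidef_vecMulVec_self_star (φ j)
  have hstep : ∀ i, 1 ≤ i → Λ (i + 1) = Λ i + Matrix.vecMulVec (φ i) (φ i) := by
    intro i hi
    obtain ⟨k, rfl⟩ : ∃ k, i = k + 1 := ⟨i - 1, by omega⟩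
    rw [hΛ, hΛ (k + 1)]
    simp only [Nat.add_sub_cancel]
    rw [Finset.sum_Icc_succ_top (by omega), add_assoc]
  clear hΛ
  induction t, ht using Nat.le_induction with
  | base =>
    have hx : 0 ≤ φ 1 ⬝ᵥ (Λ 1)⁻¹.mulVec (φ 1) := by
      simpa using (hpd 1).inv.posSemidef.dotProduct_mulVec_nonneg (φ 1)
    rw [hstep 1 le_rfl, aux_det _ (hpd 1), mul_div_cancel_left₀ _ (hpd 1).det_pos.ne']
    simpa using aux_min_log _ hx
  | succ n hn ih =>
    have hx : 0 ≤ φ (n + 1) ⬝ᵥ (Λ (n + 1))⁻¹.mulVec (φ (n + 1)) := by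
      simpa using (hpd (n + 1)).inv.posSemidef.dotProduct_mulVec_nonneg (φ (n + 1))
    have h1 := (hpd 1).det_pos
    have h2 := (hpd (n + 1)).det_pos
    rw [Finset.sum_Icc_succ_top (by omega), hstep (n + 1) (by omega), aux_det _ (hpd (n + 1)),
      mul_div_right_comm, Real.log_mul (div_pos h2 h1).ne' (by linarith), mul_add]
    exact add_le_add ih (aux_min_log _ hx)
end

section
/- Let Λ_0 ∈ ℝ^{d×d} be symmetric positive definite with smallest eigenvalue at least 1, let φ_1, φ_2, … be vectors in ℝ^d with ‖φ_i‖₂ ≤ 1 for all i, and set Λ_i = Λ_0 + Σ_{j=1}^{i−1} φ_j φ_jᵀ for i ≥ 1 (so Λ_1 = Λ_0). Then for every t ≥ 1, log(det(Λ_{t+1})/det(Λ_1)) ≤ Σ_{i=1}^t φ_iᵀ Λ_i^{−1} φ_i ≤ 2 log(det(Λ_{t+1})/det(Λ_1)). -/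
open Matrix

theorem aux_step {d : ℕ} (A : Matrix (Fin d) (Fin d) ℝ) (hA : A.PosDef)
    (hA1 : (A - 1).PosSemidef) (v : Fin d → ℝ) (hv : v ⬝ᵥ v ≤ 1) :
    (A + Matrix.vecMulVec v v).det = A.det * (1 + v ⬝ᵥ A⁻¹.mulVec v) ∧
    0 ≤ v ⬝ᵥ A⁻¹.mulVec v ∧ v ⬝ᵥ A⁻¹.mulVec v ≤ 1 := by
  have hu : IsUnit A.det := hA.det_pos.ne'.isUnit
  refine ⟨?_, ?_, ?_⟩
  · rw [Matrix.vecMulVec_eq Unit, Matrix.det_add_replicateCol_mul_replicateRow hu]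
    congr 1
    rw [Matrix.det_unique]
    simp [Matrix.mul_assoc, Matrix.mul_apply, dotProduct, Matrix.mulVec]
  · simpa using hA.inv.posSemidef.dotProduct_mulVec_nonneg v
  · set y := A⁻¹.mulVec v with hy
    have hAy : A.mulVec y = v := by
      rw [hy, Matrix.mulVec_mulVec, Matrix.mul_nonsing_inv _ hu, Matrix.one_mulVec]
    have h1 := hA1.dotProduct_mulVec_nonneg y
    rw [Matrix.sub_mulVec, Matrix.one_mulVec, hAy, star_trivial, dotProduct_sub] at h1
    have h2 : 0 ≤ (v - y) ⬝ᵥ (v - y) := by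
      simpa using dotProduct_star_self_nonneg (v - y)
    rw [dotProduct_sub, sub_dotProduct, sub_dotProduct] at h2
    rw [dotProduct_comm y v] at h1 h2
    linarith

theorem aux_log {x : ℝ} (h0 : 0 ≤ x) (h1 : x ≤ 1) :
    Real.log (1 + x) ≤ x ∧ x ≤ 2 * Real.log (1 + x) := by
  constructor
  · have := Real.log_le_sub_one_of_pos (show 0 < 1 + x by linarith)
    linarith
  · have := Real.le_log_one_add_of_nonneg h0
    have h2 : x / 2 ≤ 2 * x / (x + 2) := by
      rw [div_le_div_iff₀ (by norm_num) (by linarith)]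
      nlinarith
    linarith

/-- Let `Λ₀ ∈ ℝ^{d×d}` be symmetric positive definite with
smallest eigenvalue at least `1` (i.e. `Λ₀ - I` is positive semidefinite),
let `φ_1, φ_2, …` be vectors in `ℝ^d` with `‖φ_i‖₂ ≤ 1`, and
`Λ_i = Λ₀ + ∑_{j=1}^{i-1} φ_j φ_jᵀ` (so `Λ_1 = Λ₀`). Then for every `t ≥ 1`,
`log(det Λ_{t+1} / det Λ_1) ≤ ∑_{i=1}^t φ_iᵀ Λ_i⁻¹ φ_i
  ≤ 2 log(det Λ_{t+1} / det Λ_1)`. -/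
theorem stmt_5 (d : ℕ) (Λ₀ : Matrix (Fin d) (Fin d) ℝ) (hΛ₀ : Λ₀.PosDef)
    (hΛ₀min : (Λ₀ - 1).PosSemidef)
    (φ : ℕ → Fin d → ℝ)
    (hφ : ∀ i, 1 ≤ i → Real.sqrt (φ i ⬝ᵥ φ i) ≤ 1)
    (Λ : ℕ → Matrix (Fin d) (Fin d) ℝ)
    (hΛ : ∀ i, Λ i = Λ₀ + ∑ j ∈ Finset.Icc 1 (i - 1), Matrix.vecMulVec (φ j) (φ j))
    (t : ℕ) (ht : 1 ≤ t) :
    Real.log ((Λ (t + 1)).det / (Λ 1).det) ≤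
        ∑ i ∈ Finset.Icc 1 t, φ i ⬝ᵥ (Λ i)⁻¹.mulVec (φ i) ∧
      ∑ i ∈ Finset.Icc 1 t, φ i ⬝ᵥ (Λ i)⁻¹.mulVec (φ i) ≤
        2 * Real.log ((Λ (t + 1)).det / (Λ 1).det) := by
  clear ht
  have hps : ∀ i, (∑ j ∈ Finset.Icc 1 (i - 1), Matrix.vecMulVec (φ j) (φ j)).PosSemidef := by
    intro i
    refine Matrix.posSemidef_sum _ fun j _ => ?_
    simpa using Matrix.posSemidef_vecMulVec_self_star (φ j)
  have hpd : ∀ i, (Λ i).PosDef := fun i => by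
    rw [hΛ]; exact hΛ₀.add_posSemidef (hps i)
  have hp1 : ∀ i, (Λ i - 1).PosSemidef := fun i => by
    rw [hΛ, add_sub_right_comm]; exact hΛ₀min.add (hps i)
  have hsucc : ∀ n, Λ (n + 1 + 1) = Λ (n + 1) + Matrix.vecMulVec (φ (n + 1)) (φ (n + 1)) := by
    intro n
    rw [hΛ, hΛ (n + 1), Nat.add_sub_cancel, Nat.add_sub_cancel,
      Finset.sum_Icc_succ_top (by omega), add_assoc]
  induction t with
  | zero => simp [(hpd 1).det_pos.ne']
  | succ n ih =>
    have hv : φ (n + 1) ⬝ᵥ φ (n + 1) ≤ 1 := by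
      simpa using (Real.sqrt_le_iff.mp (hφ (n + 1) (by omega))).2
    obtain ⟨hd, h0, h1⟩ := aux_step (Λ (n + 1)) (hpd _) (hp1 _) _ hv
    obtain ⟨l1, l2⟩ := aux_log h0 h1
    rw [Finset.sum_Icc_succ_top (by omega), hsucc, hd, mul_div_right_comm,
      Real.log_mul (div_pos (hpd _).det_pos (hpd _).det_pos).ne' (by linarith)]
    constructor <;> linarith [ih.1, ih.2]
end

section
/- With λ = 1, the sum of the inverse-Gram quadratic forms satisfies Σ_{k=1}^K φ^kᵀ (Λ^k)^{−1} φ^k ≤ 2 d log(K/d + 1). -/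
open Matrix

namespace Stmt6Aux

lemma psd_sum {d : ℕ} (φ : ℕ → Fin d → ℝ) (n : ℕ) :
    (∑ τ ∈ Finset.Icc 1 n, Matrix.vecMulVec (φ τ) (φ τ)).PosSemidef := by
  refine Matrix.posSemidef_sum _ (fun i _ => ?_)
  simpa using Matrix.posSemidef_vecMulVec_self_star (φ i)

lemma det_step {d : ℕ} (A : Matrix (Fin d) (Fin d) ℝ) (hA : A.PosDef) (v : Fin d → ℝ) :
    (A + Matrix.vecMulVec v v).det = A.det * (1 + v ⬝ᵥ A⁻¹.mulVec v) := by
  have h := Matrix.det_add_replicateCol_mul_replicateRow (ι := Unit) (A := A)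
    ((Matrix.isUnit_iff_isUnit_det _).1 hA.isUnit) v v
  rw [← Matrix.vecMulVec_eq] at h
  rw [h]
  congr 1
  rw [Matrix.det_unique, Matrix.mul_assoc]
  simp [Matrix.mul_apply, Matrix.mulVec, dotProduct, Matrix.add_apply]

lemma quad_bounds {d : ℕ} (B : Matrix (Fin d) (Fin d) ℝ) (hB : B.PosSemidef) (v : Fin d → ℝ)
    (hv : v ⬝ᵥ v ≤ 1) :
    0 ≤ v ⬝ᵥ (1 + B)⁻¹.mulVec v ∧ v ⬝ᵥ (1 + B)⁻¹.mulVec v ≤ 1 := by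
  have hA : (1 + B).PosDef := Matrix.PosDef.one.add_posSemidef hB
  have h0 : 0 ≤ v ⬝ᵥ (1 + B)⁻¹.mulVec v := by
    simpa using hA.inv.posSemidef.dotProduct_mulVec_nonneg v
  refine ⟨h0, ?_⟩
  set y := (1 + B)⁻¹.mulVec v with hy
  have hvy : v = (1 + B).mulVec y := by
    rw [hy, Matrix.mulVec_mulVec, Matrix.mul_nonsing_inv _ ((Matrix.isUnit_iff_isUnit_det _).1 hA.isUnit),
      Matrix.one_mulVec]
  have h1 : y ⬝ᵥ y ≤ v ⬝ᵥ y := by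
    have h2 : 0 ≤ y ⬝ᵥ B.mulVec y := by simpa using hB.dotProduct_mulVec_nonneg y
    have h3 : v ⬝ᵥ y = y ⬝ᵥ y + y ⬝ᵥ B.mulVec y := by
      conv_lhs => rw [hvy]
      rw [dotProduct_comm, Matrix.add_mulVec, Matrix.one_mulVec, dotProduct_add]
    linarith
  have hcs : (v ⬝ᵥ y) ^ 2 ≤ (v ⬝ᵥ v) * (y ⬝ᵥ y) := by
    have := Finset.sum_mul_sq_le_sq_mul_sq Finset.univ v y
    simpa [dotProduct, sq] using this
  have hyy : 0 ≤ y ⬝ᵥ y := by simpa using dotProduct_star_self_nonneg y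
  by_contra hc
  push Not at hc
  nlinarith

lemma le_two_log {x : ℝ} (h0 : 0 ≤ x) (h1 : x ≤ 1) : x ≤ 2 * Real.log (1 + x) := by
  have h := Real.le_log_one_add_of_nonneg h0
  have : x / 2 ≤ 2 * x / (x + 2) := by
    rw [div_le_div_iff₀ (by norm_num) (by linarith)]
    nlinarith
  linarith

lemma log_det_le {d : ℕ} (A : Matrix (Fin d) (Fin d) ℝ) (hA : A.PosDef) (c : ℝ) (hc : 0 < c)
    (htr : A.trace ≤ d * c) : Real.log A.det ≤ d * Real.log c := by
  have hdet := hA.isHermitian.det_eq_prod_eigenvalues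
  have htr' := hA.isHermitian.trace_eq_sum_eigenvalues
  simp only [RCLike.ofReal_real_eq_id, id] at hdet htr'
  rw [hdet, Real.log_prod (fun i _ => (hA.eigenvalues_pos i).ne')]
  have h : ∀ i ∈ (Finset.univ : Finset (Fin d)), Real.log (hA.isHermitian.eigenvalues i) ≤
      Real.log c - 1 + hA.isHermitian.eigenvalues i / c := by
    intro i _
    have hp := hA.eigenvalues_pos i
    have := Real.log_le_sub_one_of_pos (div_pos hp hc)
    rw [Real.log_div hp.ne' hc.ne'] at this
    linarith
  refine (Finset.sum_le_sum h).trans ?_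
  rw [Finset.sum_add_distrib, ← Finset.sum_div, ← htr']
  have : A.trace / c ≤ d := by rwa [div_le_iff₀ hc]
  simp
  linarith

end Stmt6Aux

open Stmt6Aux in
/-- With `λ = 1`, `∑_{k=1}^K φ^kᵀ (Λ^k)⁻¹ φ^k ≤ 2 d log(K/d + 1)`,
where `Λ^k = I + ∑_{τ=1}^{k-1} φ^τ (φ^τ)ᵀ` and `‖φ^τ‖₂ ≤ 1`. -/
theorem stmt_6 (d K : ℕ) (hd : 1 ≤ d)
    (φ : ℕ → Fin d → ℝ)
    (hφ : ∀ τ ∈ Finset.Icc 1 K, Real.sqrt (φ τ ⬝ᵥ φ τ) ≤ 1)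
    (Λ : ℕ → Matrix (Fin d) (Fin d) ℝ)
    (hΛ : ∀ k, Λ k = (1 : Matrix (Fin d) (Fin d) ℝ) +
      ∑ τ ∈ Finset.Icc 1 (k - 1), Matrix.vecMulVec (φ τ) (φ τ)) :
    ∑ k ∈ Finset.Icc 1 K, φ k ⬝ᵥ (Λ k)⁻¹.mulVec (φ k) ≤
      2 * d * Real.log ((K : ℝ) / d + 1) := by
  have hφ' : ∀ τ ∈ Finset.Icc 1 K, φ τ ⬝ᵥ φ τ ≤ 1 := fun τ hτ => by
    simpa using (Real.sqrt_le_iff.1 (hφ τ hτ)).2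
  have hpd : ∀ k, (Λ k).PosDef := fun k => by
    rw [hΛ]; exact Matrix.PosDef.one.add_posSemidef (psd_sum φ _)
  have hsucc : ∀ n, Λ (n + 1 + 1) = Λ (n + 1) + Matrix.vecMulVec (φ (n + 1)) (φ (n + 1)) := by
    intro n
    rw [hΛ, hΛ (n + 1)]
    simp only [Nat.add_sub_cancel]
    rw [Finset.sum_Icc_succ_top (by omega), add_assoc]
  have key : ∀ n, n ≤ K → ∑ k ∈ Finset.Icc 1 n, φ k ⬝ᵥ (Λ k)⁻¹.mulVec (φ k) ≤
      2 * Real.log (Λ (n + 1)).det := by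
    intro n
    induction n with
    | zero => intro _; simp [hΛ]
    | succ n ih =>
      intro hn
      rw [Finset.sum_Icc_succ_top (by omega), hsucc, det_step _ (hpd _)]
      have hb := quad_bounds _ (psd_sum φ n) (φ (n + 1))
        (hφ' _ (Finset.mem_Icc.2 ⟨by omega, hn⟩))
      have hL : Λ (n + 1) = 1 + ∑ τ ∈ Finset.Icc 1 n, Matrix.vecMulVec (φ τ) (φ τ) := by
        rw [hΛ, Nat.add_sub_cancel]
      rw [← hL] at hb
      rw [Real.log_mul (hpd _).det_pos.ne' (by linarith [hb.1])]
      have := le_two_log hb.1 hb.2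
      have := ih (by omega)
      linarith
  have hd' : (0 : ℝ) < d := by exact_mod_cast hd
  have hc : (0 : ℝ) < (K : ℝ) / d + 1 := by positivity
  have htr : (Λ (K + 1)).trace ≤ d * ((K : ℝ) / d + 1) := by
    rw [hΛ, Nat.add_sub_cancel, Matrix.trace_add, Matrix.trace_sum, Matrix.trace_one]
    have : ∑ τ ∈ Finset.Icc 1 K, (Matrix.vecMulVec (φ τ) (φ τ)).trace ≤ ∑ τ ∈ Finset.Icc 1 K, (1 : ℝ) :=
      Finset.sum_le_sum (fun τ hτ => by rw [Matrix.trace_vecMulVec]; exact hφ' τ hτ)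
    simp only [Finset.sum_const, Nat.card_Icc, Nat.add_sub_cancel, nsmul_eq_mul, mul_one] at this
    rw [mul_add, mul_div_cancel₀ _ hd'.ne', Fintype.card_fin]
    linarith
  have := log_det_le _ (hpd (K + 1)) _ hc htr
  have := key K le_rfl
  linarith
end

section
/- The sum of all per-episode bonuses satisfies Σ_{k=1}^K Σ_{h=1}^H √(φ_h^{kᵀ} (Λ_h^k)^{−1} φ_h^k) ≤ √(2 d H T log(T/(dH) + 1)), where T = KH. Consequently, for any β > 0, Σ_{k=1}^K Σ_{h=1}^H β √(φ_h^{kᵀ} (Λ_h^k)^{−1} φ_h^k) ≤ β √(2 d H T log(T/(dH) + 1)). -/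
open Matrix

/-- The regularised Gram matrix of the first `n` vectors. -/
def gramL {d : ℕ} (v : ℕ → Fin d → ℝ) (n : ℕ) : Matrix (Fin d) (Fin d) ℝ :=
  1 + ∑ τ ∈ Finset.Icc 1 n, Matrix.vecMulVec (v τ) (v τ)

lemma gramL_succ {d : ℕ} (v : ℕ → Fin d → ℝ) (n : ℕ) :
    gramL v (n + 1) = gramL v n + Matrix.vecMulVec (v (n + 1)) (v (n + 1)) := by
  unfold gramL
  rw [Finset.sum_Icc_succ_top (by omega), add_assoc]

lemma gramL_zero {d : ℕ} (v : ℕ → Fin d → ℝ) : gramL v 0 = 1 := by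
  simp [gramL]

lemma gramL_posDef {d : ℕ} (v : ℕ → Fin d → ℝ) (n : ℕ) : (gramL v n).PosDef := by
  induction n with
  | zero => rw [gramL_zero]; exact Matrix.PosDef.one
  | succ n ih =>
    rw [gramL_succ]
    refine ih.add_posSemidef ?_
    simpa using Matrix.posSemidef_vecMulVec_self_star (v (n + 1))

lemma gramL_quad {d : ℕ} (v : ℕ → Fin d → ℝ) (n : ℕ) (y : Fin d → ℝ) :
    y ⬝ᵥ y ≤ y ⬝ᵥ (gramL v n).mulVec y := by
  induction n with
  | zero => simp [gramL_zero]
  | succ n ih =>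
    rw [gramL_succ, Matrix.add_mulVec, dotProduct_add]
    have h : 0 ≤ y ⬝ᵥ (Matrix.vecMulVec (v (n + 1)) (v (n + 1))).mulVec y := by
      have := (Matrix.posSemidef_vecMulVec_self_star (v (n + 1))).dotProduct_mulVec_nonneg y
      simpa using this
    linarith

lemma gramL_trace {d : ℕ} (v : ℕ → Fin d → ℝ) (n : ℕ)
    (hv : ∀ k ∈ Finset.Icc 1 n, v k ⬝ᵥ v k ≤ 1) :
    (gramL v n).trace ≤ d + n := by
  unfold gramL
  rw [Matrix.trace_add, Matrix.trace_sum, Matrix.trace_one]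
  simp only [Matrix.trace_vecMulVec, Fintype.card_fin]
  have := Finset.sum_le_sum hv
  simp at this
  linarith

lemma bonus_bounds {d : ℕ} (v : ℕ → Fin d → ℝ) (n : ℕ) (u : Fin d → ℝ) (hu : u ⬝ᵥ u ≤ 1) :
    0 ≤ u ⬝ᵥ (gramL v n)⁻¹.mulVec u ∧ u ⬝ᵥ (gramL v n)⁻¹.mulVec u ≤ 1 := by
  have hdet : IsUnit (gramL v n).det := (gramL_posDef v n).det_pos.ne'.isUnit
  set y := (gramL v n)⁻¹.mulVec u with hy
  have h1 : (gramL v n).mulVec y = u := by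
    rw [hy, Matrix.mulVec_mulVec, Matrix.mul_nonsing_inv _ hdet, Matrix.one_mulVec]
  have h2 := gramL_quad v n y
  rw [h1, dotProduct_comm y u] at h2
  have h3 : (u ⬝ᵥ y) ^ 2 ≤ (u ⬝ᵥ u) * (y ⬝ᵥ y) := by
    have := Finset.sum_mul_sq_le_sq_mul_sq Finset.univ u y
    simpa [dotProduct, pow_two] using this
  have h4 : 0 ≤ y ⬝ᵥ y := by
    unfold dotProduct
    exact Finset.sum_nonneg fun i _ => mul_self_nonneg _
  refine ⟨h4.trans h2, ?_⟩
  nlinarith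

lemma gramL_det_succ {d : ℕ} (v : ℕ → Fin d → ℝ) (n : ℕ) :
    (gramL v (n + 1)).det = (gramL v n).det *
      (1 + v (n + 1) ⬝ᵥ (gramL v n)⁻¹.mulVec (v (n + 1))) := by
  have hdet : IsUnit (gramL v n).det := (gramL_posDef v n).det_pos.ne'.isUnit
  rw [gramL_succ, Matrix.vecMulVec_eq Unit, Matrix.det_add_replicateCol_mul_replicateRow hdet]
  congr 1
  rw [Matrix.det_unique]
  rw [Matrix.mul_assoc, ← Matrix.replicateCol_mulVec]
  simp [Matrix.mul_apply, dotProduct]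

lemma sum_bonus_le_log_det {d : ℕ} (v : ℕ → Fin d → ℝ) (n : ℕ)
    (hv : ∀ k ∈ Finset.Icc 1 n, v k ⬝ᵥ v k ≤ 1) :
    ∑ k ∈ Finset.Icc 1 n, v k ⬝ᵥ (gramL v (k - 1))⁻¹.mulVec (v k) ≤
      2 * Real.log (gramL v n).det := by
  induction n with
  | zero => simp [gramL_zero]
  | succ n ih =>
    rw [Finset.sum_Icc_succ_top (by omega), gramL_det_succ]
    have ih' := ih fun k hk => hv k (by simp at hk ⊢; omega)
    obtain ⟨h0, h1⟩ := bonus_bounds v n (v (n + 1)) (hv _ (by simp))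
    rw [Nat.add_sub_cancel]
    set x := v (n + 1) ⬝ᵥ (gramL v n)⁻¹.mulVec (v (n + 1))
    rw [Real.log_mul (gramL_posDef v n).det_pos.ne' (by linarith)]
    have h2 := Real.one_sub_inv_le_log_of_pos (show 0 < 1 + x by linarith)
    have h3 : x / 2 ≤ 1 - (1 + x)⁻¹ := by
      have : 1 - (1 + x)⁻¹ = x / (1 + x) := by field_simp; ring
      rw [this]
      exact div_le_div_of_nonneg_left h0 (by linarith) (by linarith)
    linarith

lemma log_det_le {d : ℕ} (hd : 1 ≤ d) (v : ℕ → Fin d → ℝ) (n : ℕ)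
    (hv : ∀ k ∈ Finset.Icc 1 n, v k ⬝ᵥ v k ≤ 1) :
    Real.log (gramL v n).det ≤ d * Real.log ((n : ℝ) / d + 1) := by
  have hA := gramL_posDef v n
  have hH := hA.isHermitian
  have hd' : (0 : ℝ) < d := by exact_mod_cast hd
  set c : ℝ := (n : ℝ) / d + 1 with hc
  have hc0 : 0 < c := by positivity
  have hpos : ∀ i, 0 < hH.eigenvalues i := hA.eigenvalues_pos
  have hdet : (gramL v n).det = ∏ i, hH.eigenvalues i := by
    simpa using hH.det_eq_prod_eigenvalues
  have htr : (gramL v n).trace = ∑ i, hH.eigenvalues i := by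
    simpa using hH.trace_eq_sum_eigenvalues
  have htr2 := gramL_trace v n hv
  rw [hdet, Real.log_prod (fun i _ => (hpos i).ne')]
  have h1 : ∀ i, Real.log (hH.eigenvalues i) ≤ hH.eigenvalues i / c - 1 + Real.log c := by
    intro i
    have := Real.log_le_sub_one_of_pos (div_pos (hpos i) hc0)
    rw [Real.log_div (hpos i).ne' hc0.ne'] at this
    linarith
  refine (Finset.sum_le_sum fun i _ => h1 i).trans ?_
  rw [Finset.sum_add_distrib, Finset.sum_sub_distrib, ← Finset.sum_div, ← htr]
  have h2 : (gramL v n).trace / c ≤ d := by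
    rw [div_le_iff₀ hc0, hc]
    have : (d : ℝ) * ((n : ℝ) / d + 1) = d + n := by field_simp; ring
    linarith
  simp
  linarith

/-- With `Λ_h^k = I + ∑_{τ=1}^{k-1} φ_h^τ (φ_h^τ)ᵀ`, `‖φ_h^k‖₂ ≤ 1`
and `T = KH`, the sum of per-episode bonuses satisfies
`∑_{k=1}^K ∑_{h=1}^H √(φ_h^kᵀ (Λ_h^k)⁻¹ φ_h^k) ≤ √(2 d H T log(T/(dH)+1))`,
and consequently for any `β > 0` the `β`-scaled sum is at most
`β √(2 d H T log(T/(dH)+1))`. -/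
theorem stmt_7 (d H K : ℕ) (hd : 1 ≤ d) (hH : 1 ≤ H) (hK : 1 ≤ K)
    (φ : ℕ → ℕ → Fin d → ℝ)
    (hφ : ∀ h ∈ Finset.Icc 1 H, ∀ k ∈ Finset.Icc 1 K,
      Real.sqrt (φ h k ⬝ᵥ φ h k) ≤ 1)
    (Λ : ℕ → ℕ → Matrix (Fin d) (Fin d) ℝ)
    (hΛ : ∀ h k, Λ h k = (1 : Matrix (Fin d) (Fin d) ℝ) +
      ∑ τ ∈ Finset.Icc 1 (k - 1), Matrix.vecMulVec (φ h τ) (φ h τ))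
    (T : ℕ) (hT : T = K * H) :
    (∑ k ∈ Finset.Icc 1 K, ∑ h ∈ Finset.Icc 1 H,
        Real.sqrt (φ h k ⬝ᵥ (Λ h k)⁻¹.mulVec (φ h k)) ≤
      Real.sqrt (2 * d * H * T * Real.log ((T : ℝ) / (d * H) + 1))) ∧
    ∀ β : ℝ, 0 < β →
      ∑ k ∈ Finset.Icc 1 K, ∑ h ∈ Finset.Icc 1 H,
          β * Real.sqrt (φ h k ⬝ᵥ (Λ h k)⁻¹.mulVec (φ h k)) ≤
        β * Real.sqrt (2 * d * H * T * Real.log ((T : ℝ) / (d * H) + 1)) := by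
  have hn : ∀ h ∈ Finset.Icc 1 H, ∀ k ∈ Finset.Icc 1 K, φ h k ⬝ᵥ φ h k ≤ 1 := by
    intro h hh k hk
    have := hφ h hh k hk
    rw [Real.sqrt_le_left (by norm_num)] at this
    simpa using this
  have hL : ∀ h k, Λ h k = gramL (φ h) (k - 1) := fun h k => hΛ h k
  have hd' : (0 : ℝ) < d := by exact_mod_cast hd
  have hH' : (0 : ℝ) < H := by exact_mod_cast hH
  have main : ∑ k ∈ Finset.Icc 1 K, ∑ h ∈ Finset.Icc 1 H,
        Real.sqrt (φ h k ⬝ᵥ (Λ h k)⁻¹.mulVec (φ h k)) ≤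
      Real.sqrt (2 * d * H * T * Real.log ((T : ℝ) / (d * H) + 1)) := by
    apply Real.le_sqrt_of_sq_le
    rw [Finset.sum_comm, ← Finset.sum_product']
    refine sq_sum_le_card_mul_sum_sq.trans ?_
    rw [Finset.sum_product]
    have hT' : (T : ℝ) / (d * H) + 1 = (K : ℝ) / d + 1 := by
      rw [hT]; push_cast; field_simp
    have hb : ∀ h ∈ Finset.Icc 1 H, ∑ k ∈ Finset.Icc 1 K,
        Real.sqrt (φ h k ⬝ᵥ (Λ h k)⁻¹.mulVec (φ h k)) ^ 2 ≤
          2 * (d * Real.log ((K : ℝ) / d + 1)) := by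
      intro h hh
      have h1 := sum_bonus_le_log_det (φ h) K (hn h hh)
      have h2 := log_det_le hd (φ h) K (hn h hh)
      have h3 : ∑ k ∈ Finset.Icc 1 K, Real.sqrt (φ h k ⬝ᵥ (Λ h k)⁻¹.mulVec (φ h k)) ^ 2 =
          ∑ k ∈ Finset.Icc 1 K, φ h k ⬝ᵥ (gramL (φ h) (k - 1))⁻¹.mulVec (φ h k) := by
        refine Finset.sum_congr rfl fun k hk => ?_
        rw [hL, Real.sq_sqrt (bonus_bounds (φ h) (k - 1) (φ h k) (hn h hh k hk)).1]
      rw [h3]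
      linarith
    have hs := Finset.sum_le_sum hb
    rw [Finset.sum_const, nsmul_eq_mul, Nat.card_Icc, Nat.add_sub_cancel] at hs
    rw [hT', Finset.card_product, Nat.card_Icc, Nat.card_Icc, Nat.add_sub_cancel,
      Nat.add_sub_cancel, mul_comm H K, ← hT]
    refine (mul_le_mul_of_nonneg_left hs (Nat.cast_nonneg T)).trans (le_of_eq ?_)
    ring
  refine ⟨main, fun β hβ => ?_⟩
  simp only [← Finset.mul_sum]
  exact mul_le_mul_of_nonneg_left main hβ.le
end

section
/- With λ = 1, for any grid of indices 1 = t_1 < t_2 < ⋯ < t_{B+1} = K+1, the number of indices b ∈ [B] such that log det(Λ^{t_{b+1}}) − log det(Λ^{t_b}) > 2 log 2 is at most d log(K/d + 1)/(2 log 2). -/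
open Matrix

theorem det_mono_rank_one {d : ℕ} (A : Matrix (Fin d) (Fin d) ℝ) (hA : A.PosDef)
    (v : Fin d → ℝ) : A.det ≤ (A + Matrix.vecMulVec v v).det := by
  have hu : IsUnit A.det := hA.det_pos.ne'.isUnit
  have h := Matrix.det_add_replicateCol_mul_replicateRow (ι := Unit) hu v v
  rw [← Matrix.vecMulVec_eq] at h
  have h2 : 0 ≤ v ⬝ᵥ (A⁻¹ *ᵥ v) := by
    simpa using hA.inv.posSemidef.dotProduct_mulVec_nonneg v
  have h3 : (1 + replicateRow Unit v * A⁻¹ * replicateCol Unit v : Matrix Unit Unit ℝ).det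
      = 1 + v ⬝ᵥ (A⁻¹ *ᵥ v) := by
    rw [Matrix.det_unique, Matrix.mul_assoc, ← Matrix.replicateCol_mulVec]
    simp [Matrix.mul_apply, dotProduct]
  rw [h, h3]
  nlinarith [hA.det_pos]

theorem log_det_le_trace {d : ℕ} (A : Matrix (Fin d) (Fin d) ℝ) (hA : A.PosDef)
    (c : ℝ) (hc : 0 < c) (htr : A.trace ≤ d * c) : Real.log A.det ≤ d * Real.log c := by
  have h1 := hA.isHermitian.det_eq_prod_eigenvalues
  have h2 := hA.isHermitian.trace_eq_sum_eigenvalues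
  simp only [RCLike.ofReal_real_eq_id, id] at h1 h2
  rw [h1, Real.log_prod (fun i _ => (hA.eigenvalues_pos i).ne')]
  have h3 : ∀ i ∈ Finset.univ, Real.log (hA.isHermitian.eigenvalues i) ≤
      Real.log c + (hA.isHermitian.eigenvalues i / c - 1) := by
    intro i _
    have hp := hA.eigenvalues_pos i
    have := Real.log_le_sub_one_of_pos (div_pos hp hc)
    rw [Real.log_div hp.ne' hc.ne'] at this
    linarith
  refine (Finset.sum_le_sum h3).trans ?_
  rw [Finset.sum_add_distrib, Finset.sum_sub_distrib, ← Finset.sum_div, ← h2]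
  simp only [Finset.sum_const, Finset.card_univ, Fintype.card_fin, nsmul_eq_mul, mul_one]
  have : A.trace / c ≤ d := by rwa [div_le_iff₀ hc]
  linarith

/-- With `λ = 1` and any grid `1 = t_1 < t_2 < ⋯ < t_{B+1} = K+1`,
the number of indices `b ∈ [B]` with
`log det Λ^{t_{b+1}} - log det Λ^{t_b} > 2 log 2` is at most
`d log(K/d + 1) / (2 log 2)`. -/
theorem stmt_9 (d K B : ℕ) (hd : 1 ≤ d)
    (φ : ℕ → Fin d → ℝ)
    (hφ : ∀ τ ∈ Finset.Icc 1 K, Real.sqrt (φ τ ⬝ᵥ φ τ) ≤ 1)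
    (Λ : ℕ → Matrix (Fin d) (Fin d) ℝ)
    (hΛ : ∀ k, Λ k = (1 : Matrix (Fin d) (Fin d) ℝ) +
      ∑ τ ∈ Finset.Icc 1 (k - 1), Matrix.vecMulVec (φ τ) (φ τ))
    (t : ℕ → ℕ) (ht1 : t 1 = 1) (htB : t (B + 1) = K + 1)
    (hmono : ∀ b ∈ Finset.Icc 1 B, t b < t (b + 1)) :
    (((Finset.Icc 1 B).filter (fun b =>
        2 * Real.log 2 <
          Real.log (Λ (t (b + 1))).det - Real.log (Λ (t b)).det)).card : ℝ)
      ≤ d * Real.log ((K : ℝ) / d + 1) / (2 * Real.log 2) := by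
  have hpd : ∀ k, (Λ k).PosDef := by
    intro k
    rw [hΛ]
    refine Matrix.PosDef.one.add_posSemidef ?_
    refine Matrix.posSemidef_sum _ fun τ _ => ?_
    simpa using Matrix.posSemidef_vecMulVec_self_star (φ τ)
  have hmon : Monotone (fun k => Real.log (Λ k).det) := by
    refine monotone_nat_of_le_succ fun k => ?_
    refine Real.log_le_log (hpd k).det_pos ?_
    rcases k with _ | k
    · simp [hΛ]
    · have : Λ (k + 1 + 1) = Λ (k + 1) + Matrix.vecMulVec (φ (k + 1)) (φ (k + 1)) := by
        rw [hΛ, hΛ (k + 1)]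
        simp only [Nat.add_sub_cancel]
        rw [Finset.sum_Icc_succ_top (by omega), add_assoc]
      rw [this]
      exact det_mono_rank_one _ (hpd _) _
  have hd0 : (0 : ℝ) < d := by exact_mod_cast hd
  have htop : Real.log (Λ (K + 1)).det ≤ d * Real.log ((K : ℝ) / d + 1) := by
    refine log_det_le_trace _ (hpd _) _ (by positivity) ?_
    rw [hΛ, Matrix.trace_add, Matrix.trace_sum]
    have : ∑ τ ∈ Finset.Icc 1 (K + 1 - 1), (Matrix.vecMulVec (φ τ) (φ τ)).trace ≤
        ∑ τ ∈ Finset.Icc 1 (K + 1 - 1), (1 : ℝ) := by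
      refine Finset.sum_le_sum fun τ hτ => ?_
      have := hφ τ (by simpa using hτ)
      rw [Matrix.trace_vecMulVec]
      simpa using (Real.sqrt_le_left zero_le_one).1 this
    simp only [Finset.sum_const, Nat.card_Icc, nsmul_eq_mul, mul_one, Nat.add_sub_cancel] at this
    have e : (d : ℝ) * (K / d + 1) = K + d := by field_simp
    rw [e]
    simp only [Nat.add_sub_cancel, Matrix.trace_one, Fintype.card_fin]
    linarith
  have h1 : Real.log (Λ 1).det = 0 := by simp [hΛ]
  have htel : ∑ b ∈ Finset.Icc 1 B,
      (Real.log (Λ (t (b + 1))).det - Real.log (Λ (t b)).det) =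
      Real.log (Λ (K + 1)).det := by
    rw [← Finset.Ico_add_one_right_eq_Icc,
      Finset.sum_Ico_sub (fun b => Real.log (Λ (t b)).det) (by omega), htB, ht1, h1, sub_zero]
  have hlog : 0 < 2 * Real.log 2 := by have := Real.log_pos one_lt_two; linarith
  rw [le_div_iff₀ hlog]
  refine le_trans ?_ (htel.le.trans htop)
  rw [← nsmul_eq_mul]
  refine (Finset.card_nsmul_le_sum _ _ _ fun b hb => (Finset.mem_filter.1 hb).2.le).trans ?_
  exact Finset.sum_le_sum_of_subset_of_nonneg (Finset.filter_subset _ _)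
    fun b hb _ => sub_nonneg.2 (hmon (hmono b hb).le)
end

section
/- Let η > 1 and suppose 0 = k_0 < k_1 < ⋯ < k_m ≤ K are indices such that det(Λ^{k_i + 1}) ≥ η · det(Λ^{k_{i−1} + 1}) for every i ∈ [m] (here Λ^{k+1} is the Gram matrix built from the first k vectors, so Λ^{k_0+1} = Λ^1 = λ I_d). Then m ≤ (d / log η) · log(1 + K/(λ d)). -/
open Matrix

theorem log_det_le_aux (d : ℕ) (hd : 1 ≤ d) (A : Matrix (Fin d) (Fin d) ℝ) (hA : A.PosDef)
    (c : ℝ) (hc : 0 < c) (htr : A.trace ≤ d * c) :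
    Real.log A.det ≤ d * Real.log c := by
  have h1 := hA.1.det_eq_prod_eigenvalues
  have h2 := hA.1.trace_eq_sum_eigenvalues
  simp only [RCLike.ofReal_real_eq_id, id_eq] at h1 h2
  have hpos := hA.eigenvalues_pos
  rw [h1, Real.log_prod (fun i _ => (hpos i).ne')]
  have h3 : ∀ i ∈ Finset.univ, Real.log (hA.1.eigenvalues i) ≤
      Real.log c + (hA.1.eigenvalues i / c - 1) := by
    intro i _
    have := Real.log_le_sub_one_of_pos (div_pos (hpos i) hc)
    rw [Real.log_div (hpos i).ne' hc.ne'] at this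
    linarith
  refine (Finset.sum_le_sum h3).trans ?_
  rw [Finset.sum_add_distrib, Finset.sum_sub_distrib, ← Finset.sum_div, ← h2]
  have h4 : A.trace / c ≤ d := by rwa [div_le_iff₀ hc]
  simp
  linarith

/-- Let `η > 1` and `0 = k_0 < k_1 < ⋯ < k_m ≤ K` be indices with
`det(Λ^{k_i + 1}) ≥ η · det(Λ^{k_{i-1} + 1})` for every `i ∈ [m]` (where
`Λ^{k+1}` is the Gram matrix built from the first `k` vectors, so
`Λ^{k_0+1} = Λ^1 = λ I_d`). Then `m ≤ (d / log η) · log(1 + K/(λ d))`. -/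
theorem stmt_12 (d K : ℕ) (hd : 1 ≤ d) (lam : ℝ) (hlam : 0 < lam)
    (φ : ℕ → Fin d → ℝ)
    (hφ : ∀ τ ∈ Finset.Icc 1 K, Real.sqrt (φ τ ⬝ᵥ φ τ) ≤ 1)
    (Λ : ℕ → Matrix (Fin d) (Fin d) ℝ)
    (hΛ : ∀ j, Λ j = lam • (1 : Matrix (Fin d) (Fin d) ℝ) +
      ∑ τ ∈ Finset.Icc 1 (j - 1), Matrix.vecMulVec (φ τ) (φ τ))
    (η : ℝ) (hη : 1 < η) (m : ℕ) (k : ℕ → ℕ)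
    (hk0 : k 0 = 0)
    (hmono : ∀ i ∈ Finset.Icc 1 m, k (i - 1) < k i)
    (hkm : k m ≤ K)
    (hgrow : ∀ i ∈ Finset.Icc 1 m,
      η * (Λ (k (i - 1) + 1)).det ≤ (Λ (k i + 1)).det) :
    (m : ℝ) ≤ (d / Real.log η) * Real.log (1 + K / (lam * d)) := by
  have hd0 : (0:ℝ) < d := by exact_mod_cast hd
  have hgr : ∀ i, i ≤ m → η ^ i * lam ^ d ≤ (Λ (k i + 1)).det := by
    intro i
    induction i with
    | zero => intro _; simp [hΛ, hk0, Matrix.det_smul]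
    | succ n ih =>
      intro h
      have h1 := hgrow (n + 1) (by simp; omega)
      have h2 := ih (by omega)
      simp only [Nat.add_sub_cancel] at h1
      refine le_trans ?_ h1
      rw [pow_succ', mul_assoc]
      exact mul_le_mul_of_nonneg_left h2 (by linarith)
  have hm := hgr m le_rfl
  have hpd : (Λ (k m + 1)).PosDef := by
    rw [hΛ]
    refine Matrix.PosDef.add_posSemidef (Matrix.PosDef.one.smul hlam) ?_
    refine Matrix.posSemidef_sum _ fun τ _ => ?_
    simpa using Matrix.posSemidef_vecMulVec_self_star (φ τ)
  have hc : 0 < lam * (1 + K / (lam * d)) := by positivity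
  have htr : (Λ (k m + 1)).trace ≤ d * (lam * (1 + K / (lam * d))) := by
    have e : (d:ℝ) * (lam * (1 + K / (lam * d))) = lam * d + K := by field_simp
    rw [e, hΛ, Matrix.trace_add, Matrix.trace_smul, Matrix.trace_one, Matrix.trace_sum]
    have : ∑ τ ∈ Finset.Icc 1 (k m), (Matrix.vecMulVec (φ τ) (φ τ)).trace ≤
        ∑ τ ∈ Finset.Icc 1 (k m), (1:ℝ) := by
      refine Finset.sum_le_sum fun τ hτ => ?_
      rw [Matrix.trace_vecMulVec]
      have := hφ τ (by simp at hτ ⊢; omega)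
      simpa using (Real.sqrt_le_one).mp this
    have hk : ((k m : ℕ) : ℝ) ≤ K := by exact_mod_cast hkm
    simp at this ⊢
    linarith
  have hlog := log_det_le_aux d hd _ hpd _ hc htr
  have hη0 : 0 < η := by linarith
  have hl := Real.log_le_log (by positivity) hm
  rw [Real.log_mul (by positivity) (by positivity), Real.log_pow, Real.log_pow] at hl
  rw [Real.log_mul hlam.ne' (by positivity)] at hlog
  rw [div_mul_eq_mul_div, le_div_iff₀ (Real.log_pos hη)]
  linarith
end
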